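/- Let I, J ⊆ ℝ be intervals, E a Banach space, f : I → ℝ locally absolutely continuous with f(I) ⊆ J, and B : J → End(E) locally essentially bounded and Bochner measurable. If y : J' → E is a continuous function on a subinterval J' ⊆ J satisfying y(t) − y(s) = ∫_s^t B(λ) y(λ) dλ for all s, t ∈ J', then for any subinterval I' ⊆ f⁻¹(J'), the function x = y ∘ f restricted to I' satisfies x(t) − x(s) = ∫_s^t f'(λ) B(f(λ)) x(λ) dλ for all s, t ∈ I'. -/

import Mathlib

open MeasureTheory Set intervalIntegral

/-- `f` is absolutely continuous on the set `s`: for every `ε > 0` there is `δ > 0` such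
that for every finite family of non-overlapping subintervals of `s` of total length `< δ`,
the total variation of `f` over them is `< ε`. -/
def AbsolutelyContinuousOn (f : ℝ → ℝ) (s : Set ℝ) : Prop :=
  ∀ ε > (0 : ℝ), ∃ δ > (0 : ℝ), ∀ n : ℕ, ∀ u v : ℕ → ℝ,
    (∀ i < n, u i ∈ s ∧ v i ∈ s ∧ u i ≤ v i) →
    (∀ i < n, ∀ j < n, i ≠ j → Set.Ioo (u i) (v i) ∩ Set.Ioo (u j) (v j) = ∅) →
    (∑ i ∈ Finset.range n, (v i - u i)) < δ →
    (∑ i ∈ Finset.range n, |f (v i) - f (u i)|) < ε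

/-- `f` is locally absolutely continuous on the interval `I`: absolutely continuous on
every compact subinterval of `I`. -/
def LocallyAbsolutelyContinuousOn (f : ℝ → ℝ) (I : Set ℝ) : Prop :=
  ∀ a ∈ I, ∀ b ∈ I, AbsolutelyContinuousOn f (Set.Icc a b)

/-- `f'` is the derivative of `f` relative to `I`, in the convention of the paper:
it is the derivative at points of differentiability and `0` elsewhere. -/
def IsDerivWithinOf (f' f : ℝ → ℝ) (I : Set ℝ) : Prop :=
  ∀ t ∈ I, (DifferentiableWithinAt ℝ f I t → HasDerivWithinAt f (f' t) I t) ∧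
    (¬ DifferentiableWithinAt ℝ f I t → f' t = 0)

/-- `y ∈ L^∞_loc(J; E)`: `y` is Bochner measurable on `J` and essentially bounded on
every compact subinterval of `J`. -/
def LocEssBdd {E : Type*} [NormedAddCommGroup E] (y : ℝ → E) (J : Set ℝ) : Prop :=
  AEStronglyMeasurable y (volume.restrict J) ∧
  ∀ a ∈ J, ∀ b ∈ J, ∃ M : ℝ, ∀ᵐ t ∂(volume.restrict (Set.uIcc a b)), ‖y t‖ ≤ M

theorem ac_of {f : ℝ → ℝ} {a b : ℝ} (hab : a ≤ b) (hf : AbsolutelyContinuousOn f (Icc a b)) :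
    AbsolutelyContinuousOnInterval f a b := by
  rw [absolutelyContinuousOnInterval_iff]
  intro ε hε
  obtain ⟨δ, hδ, H⟩ := hf ε hε
  refine ⟨δ, hδ, ?_⟩
  rintro ⟨n, E⟩ ⟨h1, h2⟩ h3
  simp only [uIcc_of_le hab, Finset.mem_range] at h1 h2 h3 ⊢
  have := H n (fun i => min (E i).1 (E i).2) (fun i => max (E i).1 (E i).2) ?_ ?_ ?_
  · refine lt_of_le_of_lt (le_of_eq (Finset.sum_congr rfl fun i _ => ?_)) this
    rcases le_total (E i).1 (E i).2 with h | h
    · simp only [min_eq_left h, max_eq_right h, dist_comm (f (E i).1), Real.dist_eq]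
    · simp only [min_eq_right h, max_eq_left h, Real.dist_eq]
  · intro i hi
    obtain ⟨⟨h4, h5⟩, h6, h7⟩ := h1 i hi
    exact ⟨⟨le_min h4 h6, min_le_of_left_le h5⟩, ⟨le_max_of_le_left h4, max_le h5 h7⟩, min_le_max⟩
  · intro i hi j hj hij
    have := h2 (by simpa using hi) (by simpa using hj) hij
    exact Set.disjoint_iff_inter_eq_empty.1 (this.mono Ioo_subset_Ioc_self Ioo_subset_Ioc_self)
  · refine lt_of_le_of_lt (le_of_eq (Finset.sum_congr rfl fun i _ => ?_)) h3
    rw [Real.dist_eq, max_sub_min_eq_abs, abs_sub_comm]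

theorem ac_dom {F : Type*} [NormedAddCommGroup F] {f : ℝ → ℝ} {x : ℝ → F} {a b C : ℝ}
    (hf : AbsolutelyContinuousOnInterval f a b)
    (h : ∀ s ∈ uIcc a b, ∀ t ∈ uIcc a b, dist (x s) (x t) ≤ C * dist (f s) (f t)) :
    AbsolutelyContinuousOnInterval x a b := by
  have h0 := Filter.Tendsto.const_mul C hf
  rw [mul_zero] at h0
  refine squeeze_zero' (Filter.Eventually.of_forall fun E =>
    Finset.sum_nonneg fun _ _ => dist_nonneg) ?_ h0
  refine Filter.eventually_inf_principal.2 (Filter.Eventually.of_forall ?_)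
  rintro ⟨n, E⟩ ⟨h1, h2⟩
  simp only
  rw [Finset.mul_sum]
  exact Finset.sum_le_sum fun i hi => h _ (h1 i hi).1 _ (h1 i hi).2

theorem ac_int {F : Type*} [NormedAddCommGroup F] [NormedSpace ℝ F] {h : ℝ → F} {a b : ℝ}
    (hh : IntervalIntegrable h volume a b) :
    AbsolutelyContinuousOnInterval (fun t => ∫ u in a..t, h u) a b := by
  refine ac_dom (C := 1) (hh.norm.absolutelyContinuousOnInterval_intervalIntegral
    (c := a) (by simp)) ?_
  intro s hs t ht
  have e1 : IntervalIntegrable h volume a s := hh.mono_set (uIcc_subset_uIcc (by simp) hs)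
  have e2 : IntervalIntegrable h volume a t := hh.mono_set (uIcc_subset_uIcc (by simp) ht)
  rw [dist_eq_norm, Real.dist_eq, one_mul, integral_interval_sub_left e1 e2,
    integral_interval_sub_left e1.norm e2.norm]
  exact norm_integral_le_abs_integral_norm

theorem null_pre (f : ℝ → ℝ) (N : Set ℝ) (hN : volume N = 0) :
    ∀ᵐ τ : ℝ, f τ ∈ N → ∀ d, HasDerivAt f d τ → d = 0 := by
  let P : ℕ → ℤ → Set ℝ := fun n k => {τ | f τ ∈ N ∧
    (∀ σ, |σ - τ| < 1 / (n + 1) → |σ - τ| ≤ n * |f σ - f τ|) ∧ ⌊τ * (n + 1)⌋ = k}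
  have hP : ∀ n k, volume (P n k) = 0 := by
    intro n k
    have hl : ∀ σ ∈ P n k, ∀ τ ∈ P n k, |σ - τ| ≤ n * |f σ - f τ| := by
      rintro σ ⟨_, _, h1⟩ τ ⟨_, h2, h3⟩
      apply h2
      have := Int.abs_sub_lt_one_of_floor_eq_floor (h1.trans h3.symm)
      have hn : (0 : ℝ) < n + 1 := by positivity
      rw [← sub_mul, abs_mul, abs_of_pos hn] at this
      rwa [lt_div_iff₀ hn]
    have hinj : InjOn f (P n k) := by
      intro σ hσ τ hτ e
      have := hl σ hσ τ hτ
      rw [e] at this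
      simp only [sub_self, abs_zero, mul_zero] at this
      exact sub_eq_zero.1 (abs_eq_zero.1 (le_antisymm this (abs_nonneg _)))
    let g := Function.invFunOn f (P n k)
    have hg : ∀ τ ∈ P n k, g (f τ) = τ := fun τ hτ => hinj.leftInvOn_invFunOn hτ
    have hlip : LipschitzOnWith (n : NNReal) g (f '' P n k) := by
      refine LipschitzOnWith.of_dist_le_mul ?_
      rintro _ ⟨σ, hσ, rfl⟩ _ ⟨τ, hτ, rfl⟩
      rw [hg σ hσ, hg τ hτ]
      simpa [Real.dist_eq] using hl σ hσ τ hτ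
    have him : g '' (f '' P n k) = P n k := by
      rw [image_image]
      exact (image_congr hg).trans (image_id' _)
    have := hlip.hausdorffMeasure_image_le (d := 1) zero_le_one
    rw [him, hausdorffMeasure_real] at this
    have h0 : volume (f '' P n k) = 0 := by
      refine measure_mono_null ?_ hN
      rintro _ ⟨σ, hσ, rfl⟩
      exact hσ.1
    rw [h0, mul_zero] at this
    exact le_antisymm this (by simp)
  have hU : volume (⋃ n, ⋃ k, P n k) = 0 := by
    simp only [measure_iUnion_null_iff]
    exact hP
  have : ∀ᵐ τ : ℝ, τ ∉ ⋃ n, ⋃ k, P n k := measure_eq_zero_iff_ae_notMem.1 hU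
  filter_upwards [this] with τ hτ hN d hd
  by_contra hd0
  apply hτ
  have hs := hd.tendsto_slope
  have h2 : ∀ᶠ σ in nhdsWithin τ {τ}ᶜ, |d| / 2 < |slope f τ σ| := by
    apply (hs.abs).eventually (lt_mem_nhds _)
    have := abs_pos.2 hd0
    linarith
  rw [eventually_nhdsWithin_iff, Metric.eventually_nhds_iff] at h2
  obtain ⟨ε, hε, h3⟩ := h2
  obtain ⟨n, hn⟩ := exists_nat_gt (max (1 / ε) (2 / |d|))
  have hn1 := (le_max_left _ _).trans_lt hn
  have hn2 := (le_max_right _ _).trans_lt hn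
  have hdp := abs_pos.2 hd0
  simp only [mem_iUnion]
  refine ⟨n, _, hN, ?_, rfl⟩
  intro σ hσ
  by_cases hst : σ = τ
  · simp [hst]
  have hσ' : |σ - τ| < ε := by
    refine hσ.trans ?_
    rw [div_lt_iff₀ hε] at hn1
    rw [div_lt_iff₀ (by positivity)]
    nlinarith
  have h4 := h3 (y := σ) (by rwa [Real.dist_eq]) hst
  rw [slope_def_field, abs_div] at h4
  have hp : 0 < |σ - τ| := abs_pos.2 (sub_ne_zero.2 hst)
  rw [lt_div_iff₀ hp] at h4
  rw [div_lt_iff₀ hdp] at hn2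
  have hn0 : (0 : ℝ) ≤ n := by positivity
  nlinarith [mul_le_mul_of_nonneg_left h4.le hn0, mul_le_mul_of_nonneg_right hn2.le hp.le]

theorem core {E : Type*} [NormedAddCommGroup E] [NormedSpace ℝ E] [CompleteSpace E]
    {f f' : ℝ → ℝ} {a b c d M : ℝ} {g y : ℝ → E} (hab : a ≤ b) (hcd : c ≤ d)
    (hf : AbsolutelyContinuousOnInterval f a b)
    (hf' : ∀ τ ∈ Ioo a b, DifferentiableAt ℝ f τ → HasDerivAt f (f' τ) τ)
    (hm : MapsTo f (Icc a b) (Icc c d))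
    (hg : IntervalIntegrable g volume c d)
    (hM : ∀ᵐ u, u ∈ Icc c d → ‖g u‖ ≤ M)
    (hy : ∀ s ∈ Icc c d, ∀ t ∈ Icc c d, y t - y s = ∫ u in s..t, g u) :
    y (f b) - y (f a) = ∫ τ in a..b, f' τ • g (f τ) := by
  have hlip : ∀ s ∈ Icc c d, ∀ t ∈ Icc c d, ‖y t - y s‖ ≤ M * |t - s| := by
    intro s hs t ht
    rw [hy s hs t ht]
    refine norm_integral_le_of_norm_le_const_ae ?_
    filter_upwards [hM] with u hu h
    exact hu (uIcc_subset_Icc hs ht (uIoc_subset_uIcc h))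
  have hxac : AbsolutelyContinuousOnInterval (fun τ => y (f τ)) a b := by
    refine ac_dom (C := M) hf ?_
    intro s hs t ht
    rw [uIcc_of_le hab] at hs ht
    rw [dist_eq_norm, Real.dist_eq]
    exact hlip _ (hm ht) _ (hm hs)
  -- good points of y
  have hgood : ∀ᵐ u, (u ∈ Ioo c d → HasDerivAt y (g u) u ∧ ‖g u‖ ≤ M) ∧ u ≠ c ∧ u ≠ d := by
    have h₁ : ∀ᵐ x : ℝ, x ≠ c := by simp [ae_iff, measure_singleton]
    have h₂ : ∀ᵐ x : ℝ, x ≠ d := by simp [ae_iff, measure_singleton]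
    filter_upwards [hM, hg.ae_hasDerivAt_integral, h₁, h₂] with u hu1 hu2 hu3 hu4
    refine ⟨fun hu => ⟨?_, hu1 (Ioo_subset_Icc_self hu)⟩, hu3, hu4⟩
    rw [uIcc_of_le hcd] at hu2
    have := (hu2 (Ioo_subset_Icc_self hu) c ⟨le_rfl, hcd⟩).const_add (y c)
    refine this.congr_of_eventuallyEq ?_
    filter_upwards [Ioo_mem_nhds hu.1 hu.2] with v hv
    rw [← hy c ⟨le_rfl, hcd⟩ v (Ioo_subset_Icc_self hv)]
    abel
  have hN := null_pre f _ (ae_iff.1 hgood)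
  have hder : ∀ᵐ τ, τ ∈ Icc a b → HasDerivAt (fun τ => y (f τ)) (f' τ • g (f τ)) τ ∧
      ‖f' τ • g (f τ)‖ ≤ M * ‖deriv f τ‖ := by
    have h₁ : ∀ᵐ x : ℝ, x ≠ a := by simp [ae_iff, measure_singleton]
    have h₂ : ∀ᵐ x : ℝ, x ≠ b := by simp [ae_iff, measure_singleton]
    filter_upwards [hN, h₁, h₂, hf.ae_differentiableAt] with τ h1 h2 h3 h4 h5
    rw [uIcc_of_le hab] at h4
    have h6 : τ ∈ Ioo a b := ⟨lt_of_le_of_ne h5.1 h2.symm, lt_of_le_of_ne h5.2 h3⟩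
    have h7 := hf' τ h6 (h4 h5)
    rw [h7.deriv]
    by_cases hb : (f τ ∈ Ioo c d → HasDerivAt y (g (f τ)) (f τ) ∧ ‖g (f τ)‖ ≤ M) ∧
      f τ ≠ c ∧ f τ ≠ d
    · obtain ⟨h8, h9, h10⟩ := hb
      have h11 := hm h5
      obtain ⟨h12, h13⟩ := h8 ⟨lt_of_le_of_ne h11.1 h9.symm, lt_of_le_of_ne h11.2 h10⟩
      refine ⟨h12.scomp τ h7, ?_⟩
      rw [norm_smul, mul_comm]
      gcongr
    · have h8 := h1 hb _ h7
      rw [h8] at h7 ⊢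
      simp only [zero_smul, norm_zero, mul_zero, le_refl, and_true]
      rw [hasDerivAt_iff_isLittleO] at h7 ⊢
      simp only [smul_zero, sub_zero] at h7 ⊢
      refine Asymptotics.IsBigO.trans_isLittleO (Asymptotics.IsBigO.of_bound M ?_) h7
      filter_upwards [Icc_mem_nhds h6.1 h6.2] with v hv
      exact hlip _ (hm h5) _ (hm hv)
  have hint : IntervalIntegrable (fun τ => f' τ • g (f τ)) volume a b := by
    rw [intervalIntegrable_iff]
    have hd := intervalIntegrable_iff.1 hf.intervalIntegrable_deriv
    have hder' : ∀ᵐ τ ∂(volume.restrict (uIoc a b)),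
        HasDerivAt (fun τ => y (f τ)) (f' τ • g (f τ)) τ ∧
        ‖f' τ • g (f τ)‖ ≤ M * ‖deriv f τ‖ := by
      rw [ae_restrict_iff' measurableSet_uIoc]
      filter_upwards [hder] with τ h1 h2
      exact h1 (by rw [← uIcc_of_le hab]; exact uIoc_subset_uIcc h2)
    refine Integrable.mono' (hd.norm.const_mul M) ?_ (hder'.mono fun τ h => h.2)
    refine (stronglyMeasurable_deriv (fun τ => y (f τ))).aestronglyMeasurable.congr ?_
    exact hder'.mono fun τ h => h.1.deriv
  have hz := hxac.sub (ac_int hint)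
  obtain ⟨C, hC⟩ := hz.const_of_ae_hasDerivAt_zero (by
    filter_upwards [hder, hint.ae_hasDerivAt_integral] with τ h1 h2 h3
    have := (h1 (by rwa [← uIcc_of_le hab])).1.sub (h2 h3 a (by simp))
    rwa [sub_self] at this)
  have e1 := hC a (by simp)
  have e2 := hC b (by simp)
  simp only [Pi.sub_apply, integral_same, sub_zero] at e1 e2
  rw [e1, ← e2]
  abel

theorem forward {E : Type*} [NormedAddCommGroup E] [NormedSpace ℝ E] [CompleteSpace E]
    (I J : Set ℝ) (hI : I.OrdConnected)
    (f f' : ℝ → ℝ) (hf : LocallyAbsolutelyContinuousOn f I)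
    (hf' : IsDerivWithinOf f' f I)
    (B : ℝ → E →L[ℝ] E) (hB : LocEssBdd B J)
    (J' : Set ℝ) (hJ'c : J'.OrdConnected) (hJ'J : J' ⊆ J)
    (y : ℝ → E) (hy : ContinuousOn y J')
    (hsol : ∀ s ∈ J', ∀ t ∈ J', y t - y s = ∫ u in s..t, B u (y u))
    (I' : Set ℝ) (hI'c : I'.OrdConnected) (hI'I : I' ⊆ I) (hI'f : ∀ t ∈ I', f t ∈ J')
    (a : ℝ) (ha : a ∈ I') (b : ℝ) (hb : b ∈ I') (hab : a ≤ b) :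
    y (f b) - y (f a) = ∫ τ in a..b, f' τ • B (f τ) (y (f τ)) := by
  have hsub : Icc a b ⊆ I' := hI'c.out ha hb
  have hac := ac_of hab (hf a (hI'I ha) b (hI'I hb))
  have hcont : ContinuousOn f (Icc a b) := by
    have := hac.continuousOn
    rwa [uIcc_of_le hab] at this
  have hne : (Icc a b).Nonempty := nonempty_Icc.2 hab
  obtain ⟨p, hp, hpm⟩ := isCompact_Icc.exists_isMinOn hne hcont
  obtain ⟨q, hq, hqm⟩ := isCompact_Icc.exists_isMaxOn hne hcont
  have hc : f p ∈ J' := hI'f p (hsub hp)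
  have hd : f q ∈ J' := hI'f q (hsub hq)
  have hcd : f p ≤ f q := hpm hq
  have hs' : Icc (f p) (f q) ⊆ J' := hJ'c.out hc hd
  obtain ⟨M, hM⟩ := hB.2 _ (hJ'J hc) _ (hJ'J hd)
  rw [uIcc_of_le hcd] at hM
  obtain ⟨K, hK⟩ := isCompact_Icc.exists_bound_of_continuousOn (hy.mono hs')
  have hbd : ∀ᵐ u ∂(volume.restrict (Icc (f p) (f q))), ‖B u (y u)‖ ≤ M * K := by
    filter_upwards [hM, ae_restrict_mem measurableSet_Icc] with u h1 h2
    exact (B u).le_of_opNorm_le_of_le h1 (hK u h2)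
  have hmeas : AEStronglyMeasurable (fun u => B u (y u))
      (volume.restrict (Icc (f p) (f q))) :=
    (ContinuousLinearMap.id ℝ (E →L[ℝ] E)).aestronglyMeasurable_comp₂
      (hB.1.mono_measure (Measure.restrict_mono (hs'.trans hJ'J) le_rfl))
      ((hy.mono hs').aestronglyMeasurable measurableSet_Icc)
  have hint : IntervalIntegrable (fun u => B u (y u)) volume (f p) (f q) := by
    rw [intervalIntegrable_iff_integrableOn_Icc_of_le hcd]
    exact Integrable.of_bound hmeas (M * K) hbd
  refine core (g := fun u => B u (y u)) hab hcd hac ?_ (fun τ hτ => ⟨hpm hτ, hqm hτ⟩) hint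
    ((ae_restrict_iff' measurableSet_Icc).1 hbd)
    (fun s hs t ht => hsol s (hs' hs) t (hs' ht))
  intro τ hτ hdiff
  have hn : I ∈ nhds τ :=
    Filter.mem_of_superset (Icc_mem_nhds hτ.1 hτ.2) (hsub.trans hI'I)
  exact ((hf' τ (hI'I (hsub (Ioo_subset_Icc_self hτ)))).1 hdiff.differentiableWithinAt).hasDerivAt hn

/-- Substitution in vector solutions: if `y` is a vector solution for
`B ∈ L^∞_loc(J; End(E))` on a subinterval `J' ⊆ J` and `f ∈ AC_loc(I)`, `f(I) ⊆ J`,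
then `x = y ∘ f` solves the equation for `A = f'·(B ∘ f)` on any subinterval
`I' ⊆ f⁻¹(J')`. -/
theorem stmt3 {E : Type*} [NormedAddCommGroup E] [NormedSpace ℝ E] [CompleteSpace E]
    (I J : Set ℝ) (hI : I.OrdConnected) (hJ : J.OrdConnected)
    (f f' : ℝ → ℝ) (hf : LocallyAbsolutelyContinuousOn f I)
    (hf' : IsDerivWithinOf f' f I) (hfIJ : f '' I ⊆ J)
    (B : ℝ → E →L[ℝ] E) (hB : LocEssBdd B J)
    (J' : Set ℝ) (hJ'c : J'.OrdConnected) (hJ'J : J' ⊆ J)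
    (y : ℝ → E) (hy : ContinuousOn y J')
    (hsol : ∀ s ∈ J', ∀ t ∈ J', y t - y s = ∫ u in s..t, B u (y u))
    (I' : Set ℝ) (hI'c : I'.OrdConnected) (hI'I : I' ⊆ I) (hI'f : ∀ t ∈ I', f t ∈ J') :
    ∀ s ∈ I', ∀ t ∈ I', y (f t) - y (f s) = ∫ τ in s..t, f' τ • B (f τ) (y (f τ)) := by
  intro s hs t ht
  rcases le_total s t with h | h
  · exact forward I J hI f f' hf hf' B hB J' hJ'c hJ'J y hy hsol I' hI'c hI'I hI'f s hs t ht h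
  · rw [integral_symm, ← forward I J hI f f' hf hf' B hB J' hJ'c hJ'J y hy hsol I' hI'c hI'I hI'f
      t ht s hs h]
    abel
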